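/- Fix β > 0, a real α > 2, p ∈ (1, 2), a constant C_J ∈ (0, ∞), and an even coupling function J : ℤ \ {0} → ℝ with |J(k)| ≤ C_J·|k|^{−α} for all k ≠ 0. Then there is no probability measure μ on Ω = ℤ^ℤ (with the product σ-algebra) satisfying all three of the following: (i) shift-invariance: μ is invariant under the spatial shift S; (ii) localisation: ∫ φ_0² dμ(φ) < ∞; (iii) the Gibbs (DLR) property: for every finite set Λ ⊂ ℤ there is a set of configurations ω of full μ-measure such that for every ψ : Λ → ℤ the series h_Λ(ψ, ω) := Σ_{{i,j}⊆Λ, i≠j} J(i−j)·|ψ_i − ψ_j|^p + Σ_{i∈Λ} Σ_{j∉Λ} J(i−j)·|ψ_i − ω_j|^p converges absolutely, the partition function Z_Λ(ω) := Σ_{ψ∈ℤ^Λ} exp(−β·h_Λ(ψ, ω)) is finite, and for every fixed φ̂ ∈ ℤ^Λ the conditional expectation under μ of the indicator of {φ : φ agrees with φ̂ on Λ}, given the σ-algebra F_{Λᶜ} generated by the coordinates outside Λ, is μ-almost everywhere equal to ω ↦ exp(−β·h_Λ(φ̂, ω))/Z_Λ(ω). -/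

import Mathlib

/-!
Raising all heights in a block `Λ_N = {0, …, N - 1}` by one changes only the terms of the energy
coupling `Λ_N` to its complement. Because `p < 2`, such a term changes by at most a constant times
`|J(i - j)| (1 + |φ_i| + |φ_j|)`, and at most `|k|` bonds of displacement `k` leave the block. Hence
for a shift-invariant `μ` with finite second moment the expected absolute change is at most a
constant times `∑_k |k|^(1 - α)`, which is finite for `α > 2` and does not depend on `N`
(`exists_lintegral_raiseCost_le`). By the DLR equations, raising the block therefore sends an
event of probability close to one to an event whose probability is bounded below uniformly in `N`
(`measure_raise_ge`).

On the other hand, let `A_N` be the average height over `Λ_N`. By von Neumann's mean ergodic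
theorem `A_N` converges in `L²`, so `A_N - A_{2N}` tends to zero in probability
(`tendsto_blockAvg_diff`). Raising the block `Λ_N` increases `A_N - A_{2N}` by exactly `1 / 2`, so it
maps the event `|A_N - A_{2N}| < 1 / 4`, whose probability tends to one, into its complement, whose
probability tends to zero. Comparing the average with the one over a larger block, instead of with
its limit, makes an ergodic decomposition unnecessary.
-/

open MeasureTheory

/-- The configuration space `Ω = ℤ^ℤ`, carrying the product σ-algebra. -/
abbrev Conf : Type := ℤ → ℤ

/-- The spatial shift `S(φ)_i = φ_{i+1}`. -/
def spatialShift : Conf → Conf := fun φ i => φ (i + 1)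

/-- The inner part of the Hamiltonian in the finite volume `Λ`:
`Σ_{{i,j} ⊆ Λ, i ≠ j} J(i-j) |ψ_i - ψ_j|^p` (each unordered pair counted once). -/
noncomputable def innerH (J : ℤ → ℝ) (p : ℝ) (Λ : Finset ℤ) (ψ : Λ → ℤ) : ℝ :=
  ∑ i : Λ, ∑ j : Λ, if (i : ℤ) < (j : ℤ) then
    J ((i : ℤ) - (j : ℤ)) * |(ψ i : ℝ) - (ψ j : ℝ)| ^ p else 0

/-- The boundary part of the Hamiltonian:
`Σ_{i ∈ Λ} Σ_{j ∉ Λ} J(i-j) |ψ_i - ω_j|^p`. -/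
noncomputable def crossH (J : ℤ → ℝ) (p : ℝ) (Λ : Finset ℤ) (ψ : Λ → ℤ) (ω : Conf) : ℝ :=
  ∑ i : Λ, ∑' j : {j : ℤ // j ∉ Λ}, J ((i : ℤ) - (j : ℤ)) * |(ψ i : ℝ) - (ω (j : ℤ) : ℝ)| ^ p

/-- The finite-volume Hamiltonian `h_Λ(ψ, ω)` with boundary condition `ω`. -/
noncomputable def hamH (J : ℤ → ℝ) (p : ℝ) (Λ : Finset ℤ) (ψ : Λ → ℤ) (ω : Conf) : ℝ :=
  innerH J p Λ ψ + crossH J p Λ ψ ω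

/-- The partition function `Z_Λ(ω) = Σ_{ψ ∈ ℤ^Λ} exp(-β h_Λ(ψ, ω))`. -/
noncomputable def partZ (β : ℝ) (J : ℤ → ℝ) (p : ℝ) (Λ : Finset ℤ) (ω : Conf) : ℝ :=
  ∑' ψ : Λ → ℤ, Real.exp (-β * hamH J p Λ ψ ω)

/-- The σ-algebra `F_{Λᶜ}` generated by the coordinates outside `Λ`. -/
def outsideSigma (Λ : Finset ℤ) : MeasurableSpace Conf :=
  MeasurableSpace.comap (fun (φ : Conf) (j : {j : ℤ // j ∉ Λ}) => φ (j : ℤ)) inferInstance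

/-- The Gibbs (DLR) property for the Hamiltonian with couplings `J`, potential `|x|^p` and
inverse temperature `β`: for every finite `Λ ⊂ ℤ`, almost every boundary condition `ω` makes
all the series `h_Λ(ψ, ω)` absolutely convergent and the partition function finite, and for
every `ψ ∈ ℤ^Λ` the conditional probability of `{φ agrees with ψ on Λ}` given `F_{Λᶜ}` is
a.e. equal to `ω ↦ exp(-β h_Λ(ψ, ω)) / Z_Λ(ω)`. -/
def IsGibbs (β : ℝ) (J : ℤ → ℝ) (p : ℝ) (μ : Measure Conf) : Prop :=
  ∀ Λ : Finset ℤ,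
    (∀ᵐ ω ∂μ,
      (∀ ψ : Λ → ℤ, ∀ i : Λ,
        Summable (fun j : {j : ℤ // j ∉ Λ} =>
          J ((i : ℤ) - (j : ℤ)) * |(ψ i : ℝ) - (ω (j : ℤ) : ℝ)| ^ p)) ∧
      Summable (fun ψ : Λ → ℤ => Real.exp (-β * hamH J p Λ ψ ω))) ∧
    ∀ ψ : Λ → ℤ,
      μ[Set.indicator {φ : Conf | ∀ i : Λ, φ (i : ℤ) = ψ i} (fun _ => (1 : ℝ)) | outsideSigma Λ]
        =ᵐ[μ] fun ω => Real.exp (-β * hamH J p Λ ψ ω) / partZ β J p Λ ω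

open Filter Topology ENNReal

/-! ### The energy cost of raising a block -/

/-- The configuration equal to `ψ` on `Λ` and to `ω` off `Λ`. -/
noncomputable def glue (Λ : Finset ℤ) (ψ : Λ → ℤ) (ω : Conf) : Conf :=
  fun i => if h : i ∈ Λ then ψ ⟨i, h⟩ else ω i

/-- The configuration `φ` with all heights in `Λ` lowered by one. -/
def lowerOn (Λ : Finset ℤ) (φ : Conf) : Conf := fun i => if i ∈ Λ then φ i - 1 else φ i

/-- A `[0, ∞]`-valued upper bound for the energy needed to raise `φ` by one on `Λ`, when
`|J(k)| ≤ C |k|^(-α)`. With values in `[0, ∞]` it is measurable without any summability. -/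
noncomputable def raiseCost (C α : ℝ) (Λ : Finset ℤ) (φ : Conf) : ℝ≥0∞ :=
  ∑ i : Λ, ∑' j : {j : ℤ // j ∉ Λ}, ENNReal.ofReal
    (2 * C * |(((i : ℤ) - (j : ℤ) : ℤ) : ℝ)| ^ (-α) * (1 + |(φ i : ℝ)| + |(φ j : ℝ)|))

/-- Bernoulli's inequality gives `b ^ p - a ^ p ≤ p b ^ (p - 1) (b - a)`; then `p < 2` makes
`b ^ (p - 1)` grow at most linearly. -/
lemma rpow_sub_rpow_le {a b p : ℝ} (ha : 0 ≤ a) (hp1 : 1 < p) (hp2 : p < 2) (hab : b - a ≤ 1)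
    (hba : a ≤ b) : b ^ p - a ^ p ≤ 2 * (1 + a) := by
  rcases (ha.trans hba).eq_or_lt with h | hb
  · have : a = 0 := le_antisymm (h ▸ hba) ha
    rw [← h, this]; simp
  have h1 := one_add_mul_self_le_rpow_one_add (s := a / b - 1)
    (by have : 0 ≤ a / b := by positivity
        linarith) hp1.le
  rw [show 1 + (a / b - 1) = a / b by ring, Real.div_rpow ha hb.le,
    le_div_iff₀ (by positivity)] at h1
  have h2 : b ^ p = b ^ (p - 1) * b := by
    rw [← Real.rpow_add_one hb.ne']; ring_nf
  have h3 : b ^ p - a ^ p ≤ p * (b ^ (p - 1) * (b - a)) := by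
    have : (1 + p * (a / b - 1)) * b ^ p = b ^ p - p * (b ^ (p - 1) * (b - a)) := by
      rw [h2]; field_simp
      ring
    linarith
  have h4 : b ^ (p - 1) ≤ 1 + a :=
    calc b ^ (p - 1) ≤ (1 + a) ^ (p - 1) :=
          Real.rpow_le_rpow hb.le (by linarith) (by linarith)
      _ ≤ (1 + a) ^ (1 : ℝ) := Real.rpow_le_rpow_of_exponent_le (by linarith) (by linarith)
      _ = 1 + a := Real.rpow_one _
  have h5 : b ^ (p - 1) * (b - a) ≤ (1 + a) * 1 :=
    mul_le_mul h4 hab (by linarith) (by linarith)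
  nlinarith

lemma abs_rpow_increment_le {p : ℝ} (hp1 : 1 < p) (hp2 : p < 2) (x y : ℝ) :
    |(|x + 1 - y| ^ p - |x - y| ^ p)| ≤ 2 * (1 + |x| + |y|) := by
  have hxy : |x - y| ≤ |x| + |y| := abs_sub x y
  have e1 : |x + 1 - y| ≤ |x - y| + 1 := by
    simpa [sub_add_eq_add_sub] using abs_add_le (x - y) 1
  have e2 : |x - y| ≤ |x + 1 - y| + 1 := by
    have := abs_sub (x + 1 - y) 1
    rw [show x + 1 - y - 1 = x - y by ring] at this
    simpa using this
  rcases le_total |x - y| |x + 1 - y| with h | h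
  · rw [abs_of_nonneg (sub_nonneg.2 (Real.rpow_le_rpow (abs_nonneg _) h (by linarith)))]
    have := rpow_sub_rpow_le (abs_nonneg (x - y)) hp1 hp2 (by linarith) h
    linarith
  · rw [abs_sub_comm,
      abs_of_nonneg (sub_nonneg.2 (Real.rpow_le_rpow (abs_nonneg _) h (by linarith)))]
    have := rpow_sub_rpow_le (abs_nonneg (x + 1 - y)) hp1 hp2 (by linarith) h
    linarith

/-- The inner energy is unchanged when all of `Λ` is raised, so only the boundary bonds contribute. -/
lemma hamH_raise_le {α p C : ℝ} (hp1 : 1 < p) (hp2 : p < 2) {J : ℤ → ℝ}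
    (hJ : ∀ k : ℤ, k ≠ 0 → |J k| ≤ C * |(k : ℝ)| ^ (-α)) (Λ : Finset ℤ) (ψ : Λ → ℤ) (ω : Conf)
    (hs : ∀ ψ : Λ → ℤ, ∀ i : Λ, Summable (fun j : {j : ℤ // j ∉ Λ} =>
      J ((i : ℤ) - (j : ℤ)) * |(ψ i : ℝ) - (ω (j : ℤ) : ℝ)| ^ p)) :
    ENNReal.ofReal (hamH J p Λ (fun i => ψ i + 1) ω - hamH J p Λ ψ ω)
      ≤ raiseCost C α Λ (glue Λ ψ ω) := by
  have hin : innerH J p Λ (fun i => ψ i + 1) = innerH J p Λ ψ := by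
    simp [innerH]
  rw [hamH, hamH, hin, add_sub_add_left_eq_sub, crossH, crossH, ← Finset.sum_sub_distrib]
  refine (Real.ofReal_le_enorm _).trans ((enorm_sum_le _ _).trans
    (Finset.sum_le_sum fun i _ => ?_))
  rw [← (hs (fun i => ψ i + 1) i).tsum_sub (hs ψ i)]
  refine enorm_tsum_le_tsum_enorm.trans (ENNReal.tsum_le_tsum fun j => ?_)
  have hne : (i : ℤ) - j ≠ 0 := fun h => j.2 (by rw [← sub_eq_zero.1 h]; exact i.2)
  rw [Real.enorm_eq_ofReal_abs, ← mul_sub, abs_mul]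
  apply ENNReal.ofReal_le_ofReal
  have h1 : glue Λ ψ ω i = ψ i := by simp [glue]
  have h2 : glue Λ ψ ω j = ω j := by simp [glue, j.2]
  rw [h1, h2]
  have h3 := abs_rpow_increment_le hp1 hp2 (ψ i) (ω j)
  have h4 := hJ _ hne
  push_cast at h3 h4 ⊢
  calc _ ≤ (C * |((i : ℤ) : ℝ) - ((j : ℤ) : ℝ)| ^ (-α)) * (2 * (1 + |(ψ i : ℝ)| + |(ω j : ℝ)|)) :=
        mul_le_mul h4 h3 (abs_nonneg _) ((abs_nonneg _).trans h4)
    _ = _ := by ring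

lemma measurable_raiseCost (C α : ℝ) (Λ : Finset ℤ) : Measurable (raiseCost C α Λ) := by
  unfold raiseCost
  refine Finset.measurable_sum _ fun i _ => Measurable.tsum fun j => ?_
  have h : ∀ k : ℤ, Measurable fun φ : Conf => (φ k : ℝ) := fun k =>
    (measurable_of_countable (fun n : ℤ => (n : ℝ))).comp (measurable_pi_apply k)
  have := h i
  have := h j
  fun_prop

/-! ### The DLR equations and the raised block -/

lemma outsideSigma_le (Λ : Finset ℤ) : outsideSigma Λ ≤ MeasurableSpace.pi :=
  Measurable.comap_le (measurable_pi_lambda _ fun _ => measurable_pi_apply _)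

lemma measurable_glue (Λ : Finset ℤ) (ψ : Λ → ℤ) :
    @Measurable _ _ (outsideSigma Λ) MeasurableSpace.pi (glue Λ ψ) := by
  refine @measurable_pi_lambda _ _ _ (outsideSigma Λ) _ _ fun i => ?_
  by_cases h : i ∈ Λ
  · simp only [glue, h, dif_pos]
    exact @measurable_const _ _ _ (outsideSigma Λ) _
  · simp only [glue, h, dif_neg, not_false_iff]
    have hr : @Measurable _ _ (outsideSigma Λ) MeasurableSpace.pi
        (fun (φ : Conf) (j : {j : ℤ // j ∉ Λ}) => φ (j : ℤ)) := comap_measurable _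
    have he : Measurable fun x : {j : ℤ // j ∉ Λ} → ℤ => x ⟨i, h⟩ := measurable_pi_apply _
    exact he.comp hr

/-- The event that `φ` agrees with `ψ` on `Λ`. -/
def cyl (Λ : Finset ℤ) (ψ : Λ → ℤ) : Set Conf := {φ | ∀ i : Λ, φ i = ψ i}

lemma measurableSet_cyl (Λ : Finset ℤ) (ψ : Λ → ℤ) : MeasurableSet (cyl Λ ψ) := by
  have : cyl Λ ψ = ⋂ i : Λ, (fun φ : Conf => φ i) ⁻¹' {ψ i} := by ext; simp [cyl]
  rw [this]
  exact MeasurableSet.iInter fun i => measurable_pi_apply _ (measurableSet_singleton _)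

/-- The DLR equation integrated over an event depending only on the configuration off `Λ`. -/
lemma measure_inter_cyl {β p : ℝ} {J : ℤ → ℝ} {μ : Measure Conf} [IsProbabilityMeasure μ]
    (hG : IsGibbs β J p μ) (Λ : Finset ℤ) (ψ : Λ → ℤ) {A : Set Conf}
    (hA : MeasurableSet[outsideSigma Λ] A) :
    Integrable (fun ω => Real.exp (-β * hamH J p Λ ψ ω) / partZ β J p Λ ω) μ ∧
    μ.real (A ∩ cyl Λ ψ) = ∫ ω in A, Real.exp (-β * hamH J p Λ ψ ω) / partZ β J p Λ ω ∂μ := by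
  have hc := (hG Λ).2 ψ
  refine ⟨integrable_condExp.congr hc, ?_⟩
  have hint : Integrable (Set.indicator (cyl Λ ψ) (fun _ => (1 : ℝ))) μ :=
    (integrable_const 1).indicator (measurableSet_cyl Λ ψ)
  have h1 := setIntegral_condExp (outsideSigma_le Λ) hint hA
  rw [setIntegral_indicator (measurableSet_cyl Λ ψ), setIntegral_const] at h1
  have h2 : ∫ ω in A, (μ[Set.indicator (cyl Λ ψ) (fun _ => (1 : ℝ)) | outsideSigma Λ]) ω ∂μ
      = ∫ ω in A, Real.exp (-β * hamH J p Λ ψ ω) / partZ β J p Λ ω ∂μ :=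
    integral_congr_ae (ae_restrict_of_ae hc)
  rw [← h2, h1]; simp

/-- The right-hand event is the image of `E` when the heights in `Λ` are raised by one. Where raising
costs at most `K`, it multiplies the Gibbs weight by at least `exp (-β K)`. -/
lemma measure_raise_ge {β α p C : ℝ} (hβ : 0 < β) (hp1 : 1 < p) (hp2 : p < 2) {J : ℤ → ℝ}
    (hJ : ∀ k : ℤ, k ≠ 0 → |J k| ≤ C * |(k : ℝ)| ^ (-α)) {μ : Measure Conf}
    [IsProbabilityMeasure μ] (hG : IsGibbs β J p μ) (Λ : Finset ℤ) {K : ℝ} (hK : 0 ≤ K)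
    {E : Set Conf} (hE : MeasurableSet E) :
    ENNReal.ofReal (Real.exp (-β * K)) * μ (E ∩ {φ | raiseCost C α Λ φ ≤ ENNReal.ofReal K})
      ≤ μ {φ | lowerOn Λ φ ∈ E} := by
  set D := E ∩ {φ | raiseCost C α Λ φ ≤ ENNReal.ofReal K} with hD
  have hDm : MeasurableSet D := hE.inter (measurable_raiseCost C α Λ measurableSet_Iic)
  have hm : ∀ ψ : Λ → ℤ, MeasurableSet[outsideSigma Λ] (glue Λ ψ ⁻¹' D) :=
    fun ψ => measurable_glue Λ ψ hDm
  -- The comparison on each cylinder, from the ratio of the two Gibbs weights.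
  have key : ∀ ψ : Λ → ℤ, ENNReal.ofReal (Real.exp (-β * K)) * μ (glue Λ ψ ⁻¹' D ∩ cyl Λ ψ)
      ≤ μ (glue Λ ψ ⁻¹' D ∩ cyl Λ (fun i => ψ i + 1)) := by
    intro ψ
    obtain ⟨i1, e1⟩ := measure_inter_cyl hG Λ ψ (hm ψ)
    obtain ⟨i2, e2⟩ := measure_inter_cyl hG Λ (fun i => ψ i + 1) (hm ψ)
    rw [← ofReal_measureReal, ← ofReal_measureReal, ← ENNReal.ofReal_mul (Real.exp_pos _).le,
      e1, e2, ← integral_const_mul]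
    apply ENNReal.ofReal_le_ofReal
    refine setIntegral_mono_on_ae (i1.const_mul _).integrableOn i2.integrableOn
      (outsideSigma_le Λ _ (hm ψ)) ?_
    filter_upwards [(hG Λ).1] with ω hω hωD
    have h1 := (hamH_raise_le hp1 hp2 hJ Λ ψ ω hω.1).trans hωD.2
    rw [ENNReal.ofReal_le_ofReal_iff hK] at h1
    have hZ : 0 ≤ partZ β J p Λ ω := tsum_nonneg fun _ => (Real.exp_pos _).le
    rw [← mul_div_assoc, ← Real.exp_add]
    refine div_le_div_of_nonneg_right (Real.exp_le_exp.2 ?_) hZ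
    nlinarith
  calc ENNReal.ofReal (Real.exp (-β * K)) * μ D
      ≤ ENNReal.ofReal (Real.exp (-β * K)) * ∑' ψ : Λ → ℤ, μ (glue Λ ψ ⁻¹' D ∩ cyl Λ ψ) := by
        gcongr
        refine (measure_mono fun φ hφ => ?_).trans (measure_iUnion_le _)
        refine Set.mem_iUnion.2 ⟨fun i => φ i, ?_, fun i => rfl⟩
        have : glue Λ (fun i => φ i) φ = φ := by ext i; simp [glue]
        simpa [this] using hφ
    _ = ∑' ψ : Λ → ℤ, ENNReal.ofReal (Real.exp (-β * K)) * μ (glue Λ ψ ⁻¹' D ∩ cyl Λ ψ) :=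
        ENNReal.tsum_mul_left.symm
    _ ≤ ∑' ψ : Λ → ℤ, μ (glue Λ ψ ⁻¹' D ∩ cyl Λ (fun i => ψ i + 1)) :=
        ENNReal.tsum_le_tsum key
    _ ≤ μ (⋃ ψ : Λ → ℤ, glue Λ ψ ⁻¹' D ∩ cyl Λ (fun i => ψ i + 1)) := by
        refine tsum_meas_le_meas_iUnion_of_disjoint μ (fun ψ =>
          (outsideSigma_le Λ _ (hm ψ)).inter (measurableSet_cyl _ _)) fun ψ ψ' hne => ?_
        refine Set.disjoint_left.2 fun φ h h' => hne (funext fun i => ?_)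
        have := (h.2 i).symm.trans (h'.2 i)
        simpa using this
    _ ≤ μ {φ | lowerOn Λ φ ∈ E} := by
        refine measure_mono (Set.iUnion_subset fun ψ φ hφ => ?_)
        have : lowerOn Λ φ = glue Λ ψ φ := by
          ext i
          by_cases h : i ∈ Λ
          · have := hφ.2 ⟨i, h⟩
            simp only at this
            simp [lowerOn, glue, h, this]
          · simp [lowerOn, glue, h]
        simpa [this] using hφ.1.1

/-! ### The expected cost -/

/-- The number of bonds of displacement `k` leaving an interval is at most `|k|`, whatever the
length of the interval. -/
lemma sum_boundary_le (w : ℤ → ℝ≥0∞) (N : ℤ) :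
    ∑ i : Finset.Ico 0 N, ∑' j : {j : ℤ // j ∉ Finset.Ico 0 N}, w ((i : ℤ) - j)
      ≤ ∑' k : ℤ, (k.natAbs : ℝ≥0∞) * w k := by
  set Λ := Finset.Ico 0 N with hΛ
  have h1 : ∀ i : ℤ, ∑' j : {j : ℤ // j ∉ Λ}, w (i - j)
      = ∑' k : ℤ, if i - k ∈ Λ then 0 else w k := by
    intro i
    have e1 : ∑' j : {j : ℤ // j ∉ Λ}, w (i - j) = ∑' j : ℤ, {j : ℤ | j ∉ Λ}.indicator
        (fun j => w (i - j)) j := tsum_subtype {j : ℤ | j ∉ Λ} (fun j => w (i - j))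
    rw [e1, ← (Equiv.subLeft i).tsum_eq]
    refine tsum_congr fun k => ?_
    by_cases h : i - k ∈ Λ <;> simp [Set.indicator, h]
  rw [Finset.sum_congr rfl fun (i : Λ) _ => h1 (i : ℤ),
    Finset.sum_coe_sort Λ (fun i => ∑' k : ℤ, if i - k ∈ Λ then 0 else w k),
    ← Summable.tsum_finsetSum fun i _ => ENNReal.summable]
  refine ENNReal.tsum_le_tsum fun k => ?_
  rw [Finset.sum_ite, Finset.sum_const_zero, zero_add, Finset.sum_const, nsmul_eq_mul]
  gcongr
  rcases le_total 0 k with hk | hk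
  · calc _ ≤ (Finset.Ico 0 k).card := Finset.card_le_card fun i hi => by
          simp only [hΛ, Finset.mem_filter, Finset.mem_Ico] at hi ⊢; omega
      _ = k.natAbs := by rw [Int.card_Ico]; omega
  · calc _ ≤ (Finset.Ico (N + k) N).card := Finset.card_le_card fun i hi => by
          simp only [hΛ, Finset.mem_filter, Finset.mem_Ico] at hi ⊢; omega
      _ = k.natAbs := by rw [Int.card_Ico]; omega

lemma tsum_natAbs_mul_ne_top {α C : ℝ} (hα : 2 < α) (hC : 0 < C) :
    ∑' k : ℤ, (k.natAbs : ℝ≥0∞) * ENNReal.ofReal (2 * C * |(k : ℝ)| ^ (-α)) ≠ ∞ := by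
  have hs := ((Real.summable_abs_int_rpow (b := α - 1) (by linarith)).mul_left (2 * C))
  refine ne_top_of_le_ne_top hs.tsum_ofReal_ne_top (ENNReal.tsum_le_tsum fun k => ?_)
  rw [← ENNReal.ofReal_natCast, ← ENNReal.ofReal_mul (by positivity)]
  apply ENNReal.ofReal_le_ofReal
  rcases eq_or_ne k 0 with rfl | hk
  · simp only [Int.natAbs_zero, Nat.cast_zero, zero_mul]
    positivity
  · have h : 0 < |(k : ℝ)| := by positivity
    rw [Nat.cast_natAbs, Int.cast_abs, show -(α - 1) = -α + 1 by ring, Real.rpow_add_one h.ne']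
    apply le_of_eq; ring

lemma iterate_spatialShift (k : ℕ) (φ : Conf) (i : ℤ) : spatialShift^[k] φ i = φ (i + k) := by
  induction k generalizing φ with
  | zero => simp
  | succ k ih =>
    rw [Function.iterate_succ_apply, ih, spatialShift]
    push_cast
    ring_nf

lemma measurable_height (k : ℤ) : Measurable fun φ : Conf => (φ k : ℝ) :=
  (measurable_of_countable (fun n : ℤ => (n : ℝ))).comp (measurable_pi_apply k)

lemma measurePreserving_shift {μ : Measure Conf} (hμ : μ.map spatialShift = μ) :
    MeasurePreserving spatialShift μ μ :=
  ⟨measurable_pi_lambda _ fun _ => measurable_pi_apply _, hμ⟩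

lemma lintegral_height {μ : Measure Conf} (hμ : μ.map spatialShift = μ) (k : ℤ) :
    ∫⁻ φ : Conf, ENNReal.ofReal |(φ k : ℝ)| ∂μ = ∫⁻ φ : Conf, ENNReal.ofReal |(φ 0 : ℝ)| ∂μ := by
  have hm : ∀ k : ℤ, Measurable fun φ : Conf => ENNReal.ofReal |(φ k : ℝ)| := fun k => by
    have := measurable_height k
    fun_prop
  have step : ∀ k : ℤ, ∀ n : ℕ, ∫⁻ φ : Conf, ENNReal.ofReal |(φ (k + n) : ℝ)| ∂μ
      = ∫⁻ φ : Conf, ENNReal.ofReal |(φ k : ℝ)| ∂μ := by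
    intro k n
    rw [← ((measurePreserving_shift hμ).iterate n).lintegral_comp (hm k)]
    simp only [iterate_spatialShift]
  rcases le_total 0 k with h | h
  · have := step 0 k.toNat
    rwa [Int.toNat_of_nonneg h, zero_add] at this
  · have := step k (-k).toNat
    rw [Int.toNat_of_nonneg (by omega), add_neg_cancel] at this
    exact this.symm

/-- The expected cost of raising an interval is bounded uniformly in its length. -/
lemma exists_lintegral_raiseCost_le {α C : ℝ} (hα : 2 < α) (hC : 0 < C) {μ : Measure Conf}
    [IsProbabilityMeasure μ] (hμ : μ.map spatialShift = μ)
    (h2 : Integrable (fun φ : Conf => (φ 0 : ℝ) ^ 2) μ) :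
    ∃ M : ℝ≥0∞, M ≠ ∞ ∧ ∀ N : ℤ, ∫⁻ φ, raiseCost C α (Finset.Ico 0 N) φ ∂μ ≤ M := by
  set m := ∫⁻ φ : Conf, ENNReal.ofReal |(φ 0 : ℝ)| ∂μ with hm
  have hmfin : m ≠ ∞ := by
    have hL : MemLp (fun φ : Conf => (φ 0 : ℝ)) 2 μ :=
      (memLp_two_iff_integrable_sq (measurable_height 0).aestronglyMeasurable).2 h2
    exact ((hL.integrable (by norm_num)).abs.lintegral_lt_top).ne
  have hH : ∀ k : ℤ, Measurable fun φ : Conf => ENNReal.ofReal |(φ k : ℝ)| := fun k => by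
    have := measurable_height k
    fun_prop
  refine ⟨(∑' k : ℤ, (k.natAbs : ℝ≥0∞) * ENNReal.ofReal (2 * C * |(k : ℝ)| ^ (-α))) * (1 + m + m),
    ENNReal.mul_ne_top (tsum_natAbs_mul_ne_top hα hC) (by finiteness), fun N => ?_⟩
  have hsplit : ∀ (c : ℝ), 0 ≤ c → ∀ (i j : ℤ) (φ : Conf),
      ENNReal.ofReal (c * (1 + |(φ i : ℝ)| + |(φ j : ℝ)|)) = ENNReal.ofReal c *
        (1 + ENNReal.ofReal |(φ i : ℝ)| + ENNReal.ofReal |(φ j : ℝ)|) := by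
    intro c hc i j φ
    rw [ENNReal.ofReal_mul hc, ENNReal.ofReal_add (by positivity) (by positivity),
      ENNReal.ofReal_add (by positivity) (by positivity), ENNReal.ofReal_one]
  have hint : ∀ i j : ℤ,
      ∫⁻ φ : Conf, (1 + ENNReal.ofReal |(φ i : ℝ)| + ENNReal.ofReal |(φ j : ℝ)|) ∂μ
        = 1 + m + m := by
    intro i j
    rw [lintegral_add_right _ (hH j), lintegral_add_right _ (hH i), lintegral_height hμ i,
      lintegral_height hμ j]
    simp [hm]
  have hpos : ∀ k : ℤ, 0 ≤ 2 * C * |(k : ℝ)| ^ (-α) := fun k => by positivity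
  simp only [raiseCost, hsplit _ (hpos _)]
  have hmeas : ∀ i j : ℤ, Measurable fun φ : Conf =>
      (1 + ENNReal.ofReal |(φ i : ℝ)| + ENNReal.ofReal |(φ j : ℝ)|) := fun i j => by
    have := hH i
    have := hH j
    fun_prop
  rw [lintegral_finsetSum]
  swap
  · exact fun i _ => Measurable.tsum fun j => (hmeas i j).const_mul _
  have hterm : ∀ i : Finset.Ico 0 N, ∫⁻ φ : Conf, (∑' j : {j : ℤ // j ∉ Finset.Ico 0 N},
      ENNReal.ofReal (2 * C * |(((i : ℤ) - (j : ℤ) : ℤ) : ℝ)| ^ (-α)) *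
        (1 + ENNReal.ofReal |(φ i : ℝ)| + ENNReal.ofReal |(φ j : ℝ)|)) ∂μ
      = (∑' j : {j : ℤ // j ∉ Finset.Ico 0 N},
        ENNReal.ofReal (2 * C * |(((i : ℤ) - (j : ℤ) : ℤ) : ℝ)| ^ (-α))) * (1 + m + m) := by
    intro i
    rw [lintegral_tsum fun (j : {j : ℤ // j ∉ Finset.Ico 0 N}) =>
      ((hmeas i j).const_mul _).aemeasurable, ← ENNReal.tsum_mul_right]
    refine tsum_congr fun j => ?_
    rw [lintegral_const_mul _ (hmeas i j), hint]
  rw [Finset.sum_congr rfl fun (i : Finset.Ico 0 N) _ => hterm i, ← Finset.sum_mul]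
  gcongr
  exact sum_boundary_le (fun k => ENNReal.ofReal (2 * C * |(k : ℝ)| ^ (-α))) N

/-! ### Block averages -/

/-- The average height over the block `{0, …, N - 1}`. -/
noncomputable def blockAvg (N : ℕ) (φ : Conf) : ℝ := (N : ℝ)⁻¹ * ∑ k ∈ Finset.range N, (φ k : ℝ)

lemma measurable_blockAvg (N : ℕ) : Measurable (blockAvg N) :=
  (Finset.measurable_sum (Finset.range N) fun (k : ℕ) _ => measurable_height k).const_mul _

/-- The block averages over `N` and `2 N` sites merge in probability, by von Neumann's mean ergodic
theorem; no ergodicity is needed. -/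
lemma tendsto_blockAvg_diff {μ : Measure Conf} [IsProbabilityMeasure μ]
    (hμ : μ.map spatialShift = μ) (h2 : Integrable (fun φ : Conf => (φ 0 : ℝ) ^ 2) μ) :
    Tendsto (fun N : ℕ => μ {φ | 1 / 4 ≤ |blockAvg N φ - blockAvg (2 * N) φ|}) atTop (𝓝 0) := by
  have hS := measurePreserving_shift hμ
  have hL : MemLp (fun φ : Conf => (φ 0 : ℝ)) 2 μ :=
    (memLp_two_iff_integrable_sq (measurable_height 0).aestronglyMeasurable).2 h2
  set U : Lp ℝ 2 μ →L[ℝ] Lp ℝ 2 μ :=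
    (Lp.compMeasurePreservingₗᵢ ℝ spatialShift hS).toContinuousLinearMap with hU
  set a : ℕ → Lp ℝ 2 μ := fun N => birkhoffAverage ℝ U _root_.id N (hL.toLp _) with ha
  have hUk : ∀ k : ℕ, (U^[k] (hL.toLp _) : Conf → ℝ) =ᵐ[μ] fun φ => (φ k : ℝ) := by
    intro k
    have h1 : (U : Lp ℝ 2 μ → Lp ℝ 2 μ) = Lp.compMeasurePreserving spatialShift hS := rfl
    rw [h1, Lp.compMeasurePreserving_iterate]
    refine (Lp.coeFn_compMeasurePreserving _ (hS.iterate k)).trans ?_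
    have h3 := (hS.iterate k).quasiMeasurePreserving.ae_eq_comp hL.coeFn_toLp
    filter_upwards [h3] with φ hφ
    rw [hφ]
    simp [iterate_spatialShift]
  have haN : ∀ N : ℕ, (a N : Conf → ℝ) =ᵐ[μ] blockAvg N := by
    intro N
    have hsum : ∀ n : ℕ, ((∑ k ∈ Finset.range n, U^[k] (hL.toLp _) : Lp ℝ 2 μ) : Conf → ℝ)
        =ᵐ[μ] fun φ => ∑ k ∈ Finset.range n, (φ k : ℝ) := by
      intro n
      induction n with
      | zero =>
        simp only [Finset.range_zero, Finset.sum_empty]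
        exact Lp.coeFn_zero ℝ 2 μ
      | succ n ih =>
        rw [Finset.sum_range_succ]
        filter_upwards [Lp.coeFn_add (∑ k ∈ Finset.range n, U^[k] (hL.toLp _))
          (U^[n] (hL.toLp _)), ih, hUk n] with φ e1 e2 e3
        rw [e1, Pi.add_apply, e2, e3, Finset.sum_range_succ]
    have e : a N = (N : ℝ)⁻¹ • ∑ k ∈ Finset.range N, U^[k] (hL.toLp _) := rfl
    rw [e]
    filter_upwards [Lp.coeFn_smul (N : ℝ)⁻¹ (∑ k ∈ Finset.range N, U^[k] (hL.toLp _)), hsum N]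
      with φ e1 e2
    rw [e1, Pi.smul_apply, e2, blockAvg, smul_eq_mul]
  have hlim := ContinuousLinearMap.tendsto_birkhoffAverage_orthogonalProjection U
    (LinearIsometry.norm_toContinuousLinearMap_le _) (hL.toLp _)
  have hdiff : Tendsto (fun N : ℕ => a N - a (2 * N)) atTop (𝓝 0) := by
    have h2N : Tendsto (fun N : ℕ => 2 * N) atTop atTop :=
      tendsto_atTop_mono (fun N => Nat.le_mul_of_pos_left N two_pos) tendsto_id
    simpa using hlim.sub (hlim.comp h2N)
  have hmeas := tendstoInMeasure_of_tendsto_Lp hdiff (ENNReal.ofReal (1 / 4)) (by simp)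
  refine hmeas.congr fun N => measure_congr ?_
  filter_upwards [Lp.coeFn_sub (a N) (a (2 * N)), haN N, haN (2 * N), Lp.coeFn_zero ℝ 2 μ]
    with φ e1 e2 e3 e4
  apply propext
  change ENNReal.ofReal (1 / 4) ≤ edist ((a N - a (2 * N) : Lp ℝ 2 μ) φ) ((0 : Lp ℝ 2 μ) φ) ↔
    1 / 4 ≤ |blockAvg N φ - blockAvg (2 * N) φ|
  rw [e1, e4, Pi.sub_apply, e2, e3, Pi.zero_apply, edist_dist, Real.dist_eq, sub_zero,
    ENNReal.ofReal_le_ofReal_iff (abs_nonneg _)]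

/-- Lowering the block of `N` sites lowers its own average by `1` and that of the block of `2 N` sites
by `1 / 2`. -/
lemma blockAvg_lowerOn {N : ℕ} (hN : 0 < N) (φ : Conf) :
    blockAvg N (lowerOn (Finset.Ico 0 N) φ) - blockAvg (2 * N) (lowerOn (Finset.Ico 0 N) φ)
      = blockAvg N φ - blockAvg (2 * N) φ - 1 / 2 := by
  have h1 : ∀ n : ℕ, ∑ k ∈ Finset.range n, (lowerOn (Finset.Ico 0 (N : ℤ)) φ k : ℝ)
      = ∑ k ∈ Finset.range n, (φ k : ℝ) - (min n N : ℕ) := by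
    intro n
    induction n with
    | zero => simp
    | succ n ih =>
      rw [Finset.sum_range_succ, ih, Finset.sum_range_succ]
      by_cases h : n < N
      · rw [min_eq_left h.le, min_eq_left (Nat.succ_le_of_lt h)]
        simp [lowerOn, h]; ring
      · rw [min_eq_right (by omega), min_eq_right (by omega)]
        simp [lowerOn, h]; ring
  have hN' : (N : ℝ) ≠ 0 := by positivity
  simp only [blockAvg, h1]
  rw [min_self, min_eq_right (by omega : N ≤ 2 * N)]
  push_cast
  field_simp
  ring

/-- **Theorem 1, part (2)** (delocalisation of the long-range `p`-SOS model, `p ∈ (1,2)`):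
for every `β > 0`, `α > 2`, and even couplings `J` with `|J(k)| ≤ C_J |k|^{-α}`, there is no
shift-invariant Gibbs measure `μ` with `∫ φ_0² dμ < ∞`. -/
theorem delocalisation_pSOS (β α p C_J : ℝ) (hβ : 0 < β) (hα : 2 < α)
    (hp1 : 1 < p) (hp2 : p < 2) (hCJ : 0 < C_J) (J : ℤ → ℝ)
    (hJeven : ∀ k : ℤ, J (-k) = J k)
    (hJbound : ∀ k : ℤ, k ≠ 0 → |J k| ≤ C_J * |(k : ℝ)| ^ (-α)) :
    ¬ ∃ μ : Measure Conf, IsProbabilityMeasure μ ∧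
        μ.map spatialShift = μ ∧
        Integrable (fun φ : Conf => (φ 0 : ℝ) ^ 2) μ ∧
        IsGibbs β J p μ := by
  rintro ⟨μ, hprob, hμ, h2, hG⟩
  obtain ⟨M, hM, hcost⟩ := exists_lintegral_raiseCost_le hα hCJ hμ h2
  -- By Markov's inequality the cost exceeds `K` with probability at most `1 / 2`.
  set K : ℝ := 2 * M.toReal + 1 with hK
  have hM0 : 0 ≤ M.toReal := ENNReal.toReal_nonneg
  have hK0 : 0 < K := by positivity
  set c : ℝ := Real.exp (-β * K) with hc
  have hc0 : 0 < c := Real.exp_pos _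
  have hc1 : c ≤ 1 := Real.exp_le_one_iff.2 (by nlinarith)
  have hev := (tendsto_blockAvg_diff hμ h2).eventually_lt_const
    (show 0 < ENNReal.ofReal (c / 8) by simpa using hc0)
  obtain ⟨N, hN, hN0⟩ := (hev.and (eventually_gt_atTop 0)).exists
  set B : Set Conf := {φ | 1 / 4 ≤ |blockAvg N φ - blockAvg (2 * N) φ|} with hB
  have hBm : MeasurableSet B := measurableSet_le measurable_const
    ((measurable_blockAvg N).sub (measurable_blockAvg (2 * N))).abs
  set D : Set Conf := {φ | raiseCost C_J α (Finset.Ico 0 (N : ℤ)) φ ≤ ENNReal.ofReal K} with hD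
  have hDc : μ.real Dᶜ ≤ 1 / 2 := by
    have h1 : μ Dᶜ ≤ ENNReal.ofReal (1 / 2) :=
      calc μ Dᶜ ≤ μ {φ | ENNReal.ofReal K ≤ raiseCost C_J α (Finset.Ico 0 (N : ℤ)) φ} :=
            measure_mono fun φ hφ => by
              have : ¬ raiseCost C_J α (Finset.Ico 0 (N : ℤ)) φ ≤ ENNReal.ofReal K := hφ
              exact (not_le.1 this).le
        _ ≤ (∫⁻ φ, raiseCost C_J α (Finset.Ico 0 (N : ℤ)) φ ∂μ) / ENNReal.ofReal K :=
            meas_ge_le_lintegral_div (measurable_raiseCost _ _ _).aemeasurable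
              (by simpa using hK0) ENNReal.ofReal_ne_top
        _ ≤ M / ENNReal.ofReal K := ENNReal.div_le_div_right (hcost N) _
        _ = ENNReal.ofReal (M.toReal / K) := by
            rw [ENNReal.ofReal_div_of_pos hK0, ENNReal.ofReal_toReal hM]
        _ ≤ ENNReal.ofReal (1 / 2) := by
            apply ENNReal.ofReal_le_ofReal
            rw [div_le_div_iff₀ hK0 two_pos]
            linarith
    exact ENNReal.toReal_le_of_le_ofReal (by norm_num) h1
  have hBlt : μ.real B < c / 8 := by
    have := (ENNReal.toReal_lt_toReal (measure_ne_top μ B) ENNReal.ofReal_ne_top).2 hN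
    rwa [ENNReal.toReal_ofReal (by positivity)] at this
  -- Lowering the block moves the difference of averages by `1 / 2`, out of `(-1/4, 1/4)`.
  have hsub : {φ | lowerOn (Finset.Ico 0 (N : ℤ)) φ ∈ Bᶜ} ⊆ B := by
    intro φ hφ
    have hφ' : |blockAvg N φ - blockAvg (2 * N) φ - 1 / 2| < 1 / 4 := by
      rw [← blockAvg_lowerOn hN0]
      exact not_le.1 hφ
    have := (abs_lt.1 hφ').1
    change 1 / 4 ≤ |blockAvg N φ - blockAvg (2 * N) φ|
    linarith [le_abs_self (blockAvg N φ - blockAvg (2 * N) φ)]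
  have hmain : c * μ.real (Bᶜ ∩ D) ≤ μ.real B := by
    have h1 := (measure_raise_ge hβ hp1 hp2 hJbound hG (Finset.Ico 0 (N : ℤ)) hK0.le
      hBm.compl).trans (measure_mono hsub)
    have h3 := ENNReal.toReal_mono (measure_ne_top μ B) h1
    rwa [ENNReal.toReal_mul, ENNReal.toReal_ofReal hc0.le] at h3
  have hcover : 1 ≤ μ.real (Bᶜ ∩ D) + (μ.real B + μ.real Dᶜ) := by
    have h1 : μ.real (Bᶜ ∩ D)ᶜ ≤ μ.real B + μ.real Dᶜ := by
      rw [Set.compl_inter, compl_compl]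
      exact measureReal_union_le _ _
    have h3 := measureReal_union_le (μ := μ) (Bᶜ ∩ D) (Bᶜ ∩ D)ᶜ
    rw [Set.union_compl_self, probReal_univ] at h3
    linarith
  nlinarith
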